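/- arXiv:1012.5113 — 3 statements merged into one kernel-verified Lean document; each statement's English description precedes it below -/
import Mathlib

section
/- If the boundaries of the slices S₁ and S₂ intersect transversally (i.e., for every y with φ₁(y) ∈ {a₁, b₁} and φ₂(y) ∈ {a₂, b₂}, the derivatives Dφ₁(y) and Dφ₂(y), viewed as vectors ∇φ₁(y), ∇φ₂(y) ∈ ℝⁿ, are linearly independent), and S₁ ∩ S₂ ≠ ∅, then the interior of S₁ ∩ S₂ is nonempty: int(S₁ ∩ S₂) ≠ ∅. -/
/-!
At a common point `y` of the two slices there is a direction `v` pointing strictly into every slice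
on whose boundary `y` lies. If `y` is on neither boundary, any `v` will do; if it is on exactly one,
a multiple of the corresponding gradient is such a direction; if it is on both, transversality allows the two directional derivatives to be prescribed
independently (`exists_inner_eq_pair`). Moving from `y` along `v` for a short time lands in the open
set where both functions lie strictly between their bounds (`eventually_mem_Ioo_of_inward`), which
is contained in the intersection of the slices.
-/

/-- Inner products with two linearly independent vectors can be prescribed arbitrarily: extend the
functional prescribed on their span and represent it by Riesz. -/
lemma exists_inner_eq_pair {n : ℕ} {g h : EuclideanSpace ℝ (Fin n)}
    (hl : LinearIndependent ℝ ![g, h]) (s t : ℝ) :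
    ∃ v : EuclideanSpace ℝ (Fin n), inner ℝ g v = s ∧ inner ℝ h v = t := by
  let b := Module.Basis.span hl
  obtain ⟨F, hF⟩ := LinearMap.exists_extend (b.constr ℝ ![s, t])
  have key : ∀ i, F (![g, h] i) = ![s, t] i := by
    intro i
    have h1 := LinearMap.congr_fun hF (b i)
    rw [Module.Basis.constr_basis] at h1
    rw [← h1, LinearMap.comp_apply, Submodule.subtype_apply, Module.Basis.span_apply]
  refine ⟨(InnerProductSpace.toDual ℝ _).symm F.toContinuousLinearMap, ?_, ?_⟩
  · rw [real_inner_comm, InnerProductSpace.toDual_symm_apply]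
    exact key 0
  · rw [real_inner_comm, InnerProductSpace.toDual_symm_apply]
    exact key 1

/-- If `v` points strictly into the slice `f ⁻¹' [a, b]` at a point `y` of it (no condition when `y`
is off the boundary), then moving from `y` along `v` for a short positive time gives
values strictly between `a` and `b`. -/
lemma eventually_mem_Ioo_of_inward {n : ℕ} {f : EuclideanSpace ℝ (Fin n) → ℝ}
    {y v : EuclideanSpace ℝ (Fin n)} {a b : ℝ} (hf : DifferentiableAt ℝ f y)
    (hy : f y ∈ Set.Icc a b) (ha : f y = a → 0 < inner ℝ (gradient f y) v)
    (hb : f y = b → inner ℝ (gradient f y) v < 0) :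
    ∀ᶠ t : ℝ in nhdsWithin 0 (Set.Ioi 0), f (y + t • v) ∈ Set.Ioo a b := by
  have hline : HasDerivAt (fun t : ℝ => f (y + t • v)) (inner ℝ (gradient f y) v) 0 := by
    have h := hf.hasGradientAt.hasFDerivAt.hasLineDerivAt v
    simpa [HasLineDerivAt] using h
  have hslope := hasDerivWithinAt_iff_tendsto_slope.1 (hline.hasDerivWithinAt (s := Set.Ioi 0))
  have hcont : Filter.Tendsto (fun t : ℝ => f (y + t • v)) (nhdsWithin 0 (Set.Ioi 0))
      (nhds (f y)) := by
    have h := hline.continuousAt.tendsto.mono_left (nhdsWithin_le_nhds (s := Set.Ioi 0))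
    simpa using h
  rw [Set.sdiff_singleton_eq_self (by simp)] at hslope
  have hlow : ∀ᶠ t : ℝ in nhdsWithin 0 (Set.Ioi 0), a < f (y + t • v) := by
    rcases hy.1.eq_or_lt with h | h
    · filter_upwards [hslope.eventually (lt_mem_nhds (ha h.symm)), self_mem_nhdsWithin]
        with t ht ht0
      have := (slope_pos_iff_of_le (le_of_lt ht0)).1 ht
      simpa [← h] using this
    · exact hcont.eventually (lt_mem_nhds h)
  have hhigh : ∀ᶠ t : ℝ in nhdsWithin 0 (Set.Ioi 0), f (y + t • v) < b := by
    rcases hy.2.eq_or_lt with h | h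
    · filter_upwards [hslope.eventually (gt_mem_nhds (hb h)), self_mem_nhdsWithin]
        with t ht ht0
      have := (slope_neg_iff_of_le (le_of_lt ht0)).1 ht
      simpa [h] using this
    · exact hcont.eventually (gt_mem_nhds h)
  exact hlow.and hhigh

/-- Transversally intersecting slices have nonempty-interior intersection. -/
theorem stmt_6 (n : ℕ) (hn : 2 ≤ n)
    (φ₁ φ₂ : EuclideanSpace ℝ (Fin n) → ℝ)
    (hφ₁ : ContDiff ℝ 1 φ₁) (hφ₂ : ContDiff ℝ 1 φ₂)
    (a₁ b₁ a₂ b₂ : ℝ) (hab₁ : a₁ < b₁) (hab₂ : a₂ < b₂)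
    (hreg₁ : ∀ y, (φ₁ y = a₁ ∨ φ₁ y = b₁) → fderiv ℝ φ₁ y ≠ 0)
    (hreg₂ : ∀ y, (φ₂ y = a₂ ∨ φ₂ y = b₂) → fderiv ℝ φ₂ y ≠ 0)
    (htrans : ∀ y, (φ₁ y = a₁ ∨ φ₁ y = b₁) → (φ₂ y = a₂ ∨ φ₂ y = b₂) →
      LinearIndependent ℝ ![gradient φ₁ y, gradient φ₂ y])
    (hne : (φ₁ ⁻¹' Set.Icc a₁ b₁ ∩ φ₂ ⁻¹' Set.Icc a₂ b₂).Nonempty) :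
    (interior (φ₁ ⁻¹' Set.Icc a₁ b₁ ∩ φ₂ ⁻¹' Set.Icc a₂ b₂)).Nonempty := by
  obtain ⟨y, hy₁, hy₂⟩ := hne
  have single : ∀ (f : EuclideanSpace ℝ (Fin n) → ℝ) (s : ℝ), fderiv ℝ f y ≠ 0 →
      ∃ v, inner ℝ (gradient f y) v = s := by
    intro f s hf
    have hg : gradient f y ≠ 0 := by simpa [gradient] using hf
    refine ⟨(s / inner ℝ (gradient f y) (gradient f y)) • gradient f y, ?_⟩
    rw [inner_smul_right, div_mul_cancel₀ _ (inner_self_ne_zero.2 hg)]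
  -- The prescribed slope is `1` on the lower boundary and `-1` on the upper one.
  obtain ⟨v, hv₁, hv₂⟩ : ∃ v,
      ((φ₁ y = a₁ ∨ φ₁ y = b₁) → inner ℝ (gradient φ₁ y) v = if φ₁ y = a₁ then 1 else -1) ∧
      ((φ₂ y = a₂ ∨ φ₂ y = b₂) → inner ℝ (gradient φ₂ y) v = if φ₂ y = a₂ then 1 else -1) := by
    by_cases h₁ : φ₁ y = a₁ ∨ φ₁ y = b₁
    · by_cases h₂ : φ₂ y = a₂ ∨ φ₂ y = b₂
      · obtain ⟨v, e₁, e₂⟩ := exists_inner_eq_pair (htrans y h₁ h₂)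
          (if φ₁ y = a₁ then 1 else -1) (if φ₂ y = a₂ then 1 else -1)
        exact ⟨v, fun _ => e₁, fun _ => e₂⟩
      · obtain ⟨v, e₁⟩ := single φ₁ (if φ₁ y = a₁ then 1 else -1) (hreg₁ y h₁)
        exact ⟨v, fun _ => e₁, fun h => absurd h h₂⟩
    · by_cases h₂ : φ₂ y = a₂ ∨ φ₂ y = b₂
      · obtain ⟨v, e₂⟩ := single φ₂ (if φ₂ y = a₂ then 1 else -1) (hreg₂ y h₂)
        exact ⟨v, fun h => absurd h h₁, fun _ => e₂⟩
      · exact ⟨0, fun h => absurd h h₁, fun h => absurd h h₂⟩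
  have E₁ := eventually_mem_Ioo_of_inward (v := v) (hφ₁.differentiable one_ne_zero y) hy₁
    (fun h => by rw [hv₁ (Or.inl h), if_pos h]; norm_num)
    (fun h => by rw [hv₁ (Or.inr h), if_neg (by rw [h]; exact hab₁.ne')]; norm_num)
  have E₂ := eventually_mem_Ioo_of_inward (v := v) (hφ₂.differentiable one_ne_zero y) hy₂
    (fun h => by rw [hv₂ (Or.inl h), if_pos h]; norm_num)
    (fun h => by rw [hv₂ (Or.inr h), if_neg (by rw [h]; exact hab₂.ne')]; norm_num)
  obtain ⟨t, ht₁, ht₂⟩ := (E₁.and E₂).exists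
  refine ⟨y + t • v, interior_maximal (Set.inter_subset_inter
    (Set.preimage_mono Set.Ioo_subset_Icc_self) (Set.preimage_mono Set.Ioo_subset_Icc_self))
    ?_ ⟨ht₁, ht₂⟩⟩
  exact (isOpen_Ioo.preimage hφ₁.continuous).inter (isOpen_Ioo.preimage hφ₂.continuous)
end

section
/- (Guaranteed exit through the upper boundary within the invariant bound.) Suppose 0 < m and φ̇(y) ≥ m for all y ∈ S. Let x : [0,∞) → ℝⁿ be differentiable with x'(t) = f(x(t)) for all t ≥ 0 and x(0) ∈ S. Then there exists a time T with 0 ≤ T ≤ (b − φ(x(0)))/m ≤ Δa/m such that x(t) ∈ S for all t ∈ [0,T] and φ(x(T)) = b; i.e., the trajectory leaves the slice through its upper boundary no later than time Δa/m. -/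
/-!
Along the trajectory, `g t = φ (x t)` is a real function whose derivative is `φ̇ (x t)`, hence at
least `m` whenever `g t ∈ [a, b]`. Such a `g` cannot cross level `a` downwards, since its derivative
is positive there. So, as long as it stays below `b`, it stays in `[a, b]` and grows at rate at
least `m` (`le_and_growth_of_le`). It must therefore reach level `b` by time `(b - g 0) / m`, and
the first time it does so is the required exit time (`exists_exit_time`).
-/

open Set

open scoped RealInnerProductSpace

/-- A function with derivative at least `m > 0` wherever its values lie in `[a, b]`, and which
starts at or above `a`, stays at or above `a` and has average growth rate at least `m` on any
interval `[0, s]` where it does not exceed `b`. -/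
lemma le_and_growth_of_le {g g' : ℝ → ℝ} {a b m : ℝ} (hm : 0 < m)
    (hg : ∀ t, 0 ≤ t → HasDerivAt g (g' t) t)
    (hg' : ∀ t, 0 ≤ t → g t ∈ Icc a b → m ≤ g' t) (h0 : a ≤ g 0)
    {s : ℝ} (hs : 0 ≤ s) (hb : ∀ t ∈ Icc 0 s, g t ≤ b) :
    (∀ t ∈ Icc 0 s, a ≤ g t) ∧ g 0 + m * s ≤ g s := by
  have hc : ContinuousOn g (Icc 0 s) := fun t ht =>
    (hg t ht.1).continuousAt.continuousWithinAt
  have ha : ∀ t ∈ Icc 0 s, a ≤ g t := by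
    intro t ht
    -- Barrier argument for `-g` against the constant `-a`.
    have := image_le_of_deriv_right_lt_deriv_boundary' (f := fun t => -g t)
      (f' := fun t => -g' t) (B := fun _ => -a) (B' := fun _ => 0) (a := 0) (b := s)
      hc.neg (fun t ht => (hg t ht.1).neg.hasDerivWithinAt) (by simpa using h0)
      continuousOn_const (fun t _ => hasDerivWithinAt_const _ _ _)
      (fun t ht hta => by
        have hta' : g t = a := neg_injective hta
        have := hg' t ht.1 ⟨hta'.ge, hb t ⟨ht.1, ht.2.le⟩⟩
        linarith) ht
    simpa using this
  refine ⟨ha, ?_⟩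
  have := (convex_Icc 0 s).mul_sub_le_image_sub_of_le_deriv hc
    (fun t ht => (hg t (interior_subset ht).1).differentiableAt.differentiableWithinAt)
    (C := m) (fun t ht => by
      have ht := interior_subset ht
      rw [(hg t ht.1).deriv]
      exact hg' t ht.1 ⟨ha t ht, hb t ht⟩)
    0 ⟨le_rfl, hs⟩ s ⟨hs, le_rfl⟩ hs
  linarith

/-- The one-dimensional form of the exit theorem; the exit time is the first time at which
`g` takes the value `b`. -/
lemma exists_exit_time {g g' : ℝ → ℝ} {a b m : ℝ} (hm : 0 < m)
    (hg : ∀ t, 0 ≤ t → HasDerivAt g (g' t) t)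
    (hg' : ∀ t, 0 ≤ t → g t ∈ Icc a b → m ≤ g' t) (h0 : g 0 ∈ Icc a b) :
    ∃ T, 0 ≤ T ∧ T ≤ (b - g 0) / m ∧ (∀ t ∈ Icc 0 T, g t ∈ Icc a b) ∧ g T = b := by
  have hcont : ∀ s, ContinuousOn g (Icc 0 s) := fun s t ht =>
    (hg t ht.1).continuousAt.continuousWithinAt
  have hivt : ∀ t, 0 ≤ t → b ≤ g t → ∃ u ∈ Icc 0 t, g u = b := fun t ht hbt =>
    intermediate_value_Icc ht (hcont t) ⟨h0.2, hbt⟩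
  set T₀ := (b - g 0) / m with hT₀
  have hT₀0 : 0 ≤ T₀ := div_nonneg (sub_nonneg.2 h0.2) hm.le
  have hne : (Icc 0 T₀ ∩ g ⁻¹' {b}).Nonempty := by
    by_contra hempty
    have hlt : ∀ t ∈ Icc 0 T₀, g t < b := by
      intro t ht
      by_contra! hbt
      obtain ⟨u, hu, hub⟩ := hivt t ht.1 hbt
      exact hempty ⟨u, ⟨hu.1, hu.2.trans ht.2⟩, hub⟩
    have hgrow := (le_and_growth_of_le hm hg hg' h0.1 hT₀0 fun t ht => (hlt t ht).le).2
    have hend := hlt T₀ ⟨hT₀0, le_rfl⟩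
    have : m * T₀ = b - g 0 := mul_div_cancel₀ _ hm.ne'
    linarith
  have hcomp : IsCompact (Icc 0 T₀ ∩ g ⁻¹' {b}) :=
    isCompact_Icc.of_isClosed_subset
      ((hcont T₀).preimage_isClosed_of_isClosed isClosed_Icc isClosed_singleton) inter_subset_left
  obtain ⟨T, ⟨hT, hTb⟩, hleast⟩ := hcomp.exists_isLeast hne
  have hle : ∀ t ∈ Icc 0 T, g t ≤ b := by
    intro t ht
    by_contra! hbt
    obtain ⟨u, hu, hub⟩ := hivt t ht.1 hbt.le
    have hTu : T ≤ u := hleast ⟨⟨hu.1, hu.2.trans (ht.2.trans hT.2)⟩, hub⟩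
    have hut : u = t := le_antisymm hu.2 (ht.2.trans hTu)
    rw [hut] at hub
    exact hbt.ne' hub
  have hge := (le_and_growth_of_le hm hg hg' h0.1 hT.1 hle).1
  exact ⟨T, hT.1, hT.2, fun t ht => ⟨hge t ht, hle t ht⟩, hTb⟩

/-- Guaranteed exit through the upper boundary within the invariant bound. -/
theorem stmt_9 (n : ℕ) (hn : 1 ≤ n)
    (f : EuclideanSpace ℝ (Fin n) → EuclideanSpace ℝ (Fin n)) (hf : Continuous f)
    (φ : EuclideanSpace ℝ (Fin n) → ℝ) (hφ : ContDiff ℝ 1 φ)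
    (a b : ℝ) (hab : a < b)
    (m : ℝ) (hm : 0 < m)
    (hbound : ∀ y ∈ φ ⁻¹' Set.Icc a b, m ≤ ⟪gradient φ y, f y⟫)
    (x : ℝ → EuclideanSpace ℝ (Fin n))
    (hxd : ∀ t : ℝ, 0 ≤ t → HasDerivAt x (f (x t)) t)
    (hx0 : x 0 ∈ φ ⁻¹' Set.Icc a b) :
    ∃ T : ℝ, 0 ≤ T ∧ T ≤ (b - φ (x 0)) / m ∧ (b - φ (x 0)) / m ≤ (b - a) / m ∧
      (∀ t ∈ Set.Icc (0 : ℝ) T, x t ∈ φ ⁻¹' Set.Icc a b) ∧ φ (x T) = b := by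
  have hder : ∀ t : ℝ, 0 ≤ t →
      HasDerivAt (fun t => φ (x t)) ⟪gradient φ (x t), f (x t)⟫ t := by
    intro t ht
    have hgrad := ((hφ.differentiable one_ne_zero) (x t)).hasGradientAt.hasFDerivAt
    exact hgrad.comp_hasDerivAt t (hxd t ht)
  obtain ⟨T, hT0, hT, hmem, hTb⟩ :=
    exists_exit_time hm hder (fun t _ ht => hbound (x t) ht) hx0
  refine ⟨T, hT0, hT, ?_, hmem, hTb⟩
  have := hx0.1
  gcongr
end

section
/- (Positive invariance of sublevel sets.) Let f : ℝⁿ → ℝⁿ be continuous and φ : ℝⁿ → ℝ continuously differentiable, and let b ∈ ℝ. Suppose ⟨∇φ(y), f(y)⟩ < 0 for every y with φ(y) = b. Then the sublevel set A = { y ∈ ℝⁿ : φ(y) ≤ b } is positively invariant for the differential equation ẋ = f(x): for every T > 0 and every differentiable x : [0,T] → ℝⁿ with x'(t) = f(x(t)) for all t ∈ [0,T] and φ(x(0)) ≤ b, one has φ(x(t)) ≤ b for all t ∈ [0,T]. -/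
open scoped RealInnerProductSpace

/-- Positive invariance of sublevel sets. -/
theorem stmt_10 (n : ℕ)
    (f : EuclideanSpace ℝ (Fin n) → EuclideanSpace ℝ (Fin n)) (hf : Continuous f)
    (φ : EuclideanSpace ℝ (Fin n) → ℝ) (hφ : ContDiff ℝ 1 φ)
    (b : ℝ)
    (hbnd : ∀ y, φ y = b → ⟪gradient φ y, f y⟫ < 0)
    (T : ℝ) (hT : 0 < T)
    (x : ℝ → EuclideanSpace ℝ (Fin n))
    (hxd : ∀ t ∈ Set.Icc (0 : ℝ) T, HasDerivAt x (f (x t)) t)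
    (hx0 : φ (x 0) ≤ b) :
    ∀ t ∈ Set.Icc (0 : ℝ) T, φ (x t) ≤ b := by
  have hd : ∀ t ∈ Set.Icc (0 : ℝ) T,
      HasDerivAt (fun s => φ (x s)) ⟪gradient φ (x t), f (x t)⟫ t := fun t ht => by
    have h := ((hφ.differentiable one_ne_zero (x t)).hasGradientAt.hasFDerivAt).comp_hasDerivAt
      t (hxd t ht)
    simpa [Function.comp_def] using h
  -- Fencing theorem for `φ ∘ x` against the constant barrier `b`: on contact the derivative
  -- of `φ ∘ x` is negative, so the barrier cannot be crossed.
  exact fun t ht => image_le_of_deriv_right_lt_deriv_boundary (B' := fun _ => 0)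
    (fun s hs => (hd s hs).continuousAt.continuousWithinAt)
    (fun s hs => (hd s (Set.Ico_subset_Icc_self hs)).hasDerivWithinAt)
    hx0 (fun s => hasDerivAt_const s b) (fun s _ hs => hbnd (x s) hs) ht
end
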